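/- Let Φ be of type B_n, C_n, or D_n and suppose (S, S̄) > (S', S̄') are two equivalent separable pairs in 𝒟 for the system (Φ, Φ_I, Φ_J), with a shortest fundamental chain (S_1, S̄_1) ∼ (S_2, S̄_2) ∼ … ∼ (S_k, S̄_k) from (S, S̄) to (S', S̄'). Then: (1) for every 1 ≤ i < k, S_i = S_{i+1} or S̄_i = S̄_{i+1}; (2) for all 1 ≤ i < j ≤ k, S_i ≠ S_j (resp. S̄_i ≠ S̄_j) unless j = i+1; (3) (S_1, S̄_1) > (S_2, S̄_2) > … > (S_k, S̄_k). -/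

import Mathlib

namespace JantzenBlocks

open scoped Classical

/-- The three classical types `B`, `C`, `D`. -/
inductive CType : Type
  | B | C | D
deriving DecidableEq

/-- The weight space `ℝ^n`. -/
abbrev V (n : ℕ) := Fin n → ℝ

noncomputable section

/-- The standard inner product on `ℝ^n`. -/
def inn {n : ℕ} (x y : V n) : ℝ := ∑ i, x i * y i

/-- The standard basis vector `e i`. -/
def ee {n : ℕ} (i : Fin n) : V n := Pi.single i 1

/-- The reflection `s_v` in the vector `v`. -/
def sRefl {n : ℕ} (v x : V n) : V n := x - (2 * inn x v / inn v v) • v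

/-- The roots `±e_i ± e_j` (`i ≠ j`), i.e. the root system of type `D_n`. -/
def DRoots (n : ℕ) : Set (V n) :=
  {v | ∃ i j : Fin n, i ≠ j ∧ (v = ee i + ee j ∨ v = ee i - ee j ∨ v = -ee i - ee j)}

/-- The ambient root system `Φ` of type `B_n`, `C_n` or `D_n`. -/
def Phi (n : ℕ) : CType → Set (V n)
  | CType.B => DRoots n ∪ {v | ∃ i : Fin n, v = ee i ∨ v = -ee i}
  | CType.C => DRoots n ∪ {v | ∃ i : Fin n, v = (2:ℝ) • ee i ∨ v = -((2:ℝ) • ee i)}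
  | CType.D => DRoots n

/-- The standard positive system `Φ⁺`: roots whose first nonzero coordinate is positive. -/
def PhiPos (n : ℕ) (ct : CType) : Set (V n) :=
  {v | v ∈ Phi n ct ∧ ∃ i : Fin n, 0 < v i ∧ ∀ j : Fin n, j < i → v j = 0}

/-- The simple root `α_{i+1}` (`0`-based index `i`). -/
def alphaR (n : ℕ) (ct : CType) (i : Fin n) : V n :=
  if h : i.1 + 1 < n then ee i - ee ⟨i.1 + 1, h⟩
  else
    match ct with
    | CType.B => ee i
    | CType.C => (2:ℝ) • ee i
    | CType.D => ee ⟨n - 2, Nat.sub_lt i.pos (by norm_num)⟩ + ee i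

/-- The subsystem `Φ_I` generated by the simple roots indexed by `I`. -/
def PhiI (n : ℕ) (ct : CType) (I : Finset (Fin n)) : Set (V n) :=
  Phi n ct ∩ (Submodule.span ℝ (alphaR n ct '' (I : Set (Fin n))) : Set (V n))

/-- `λ` is `Φ_I`-regular. -/
def RegI (n : ℕ) (ct : CType) (I : Finset (Fin n)) (lam : V n) : Prop :=
  ∀ β ∈ PhiI n ct I, inn lam β ≠ 0

/-- `λ` is integral. -/
def IntegralW (n : ℕ) (ct : CType) (lam : V n) : Prop :=
  ∀ β ∈ Phi n ct, ∃ k : ℤ, 2 * inn lam β / inn β β = (k : ℝ)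

/-- `λ` is dominant. -/
def DominantW (n : ℕ) (ct : CType) (lam : V n) : Prop :=
  ∀ i : Fin n, 0 ≤ inn lam (alphaR n ct i)

/-- `μ` lies in the `W_I`-orbit of `λ` (`W_I` generated by the reflections `s_α`, `α ∈ I`). -/
def WIOrb (n : ℕ) (ct : CType) (I : Finset (Fin n)) : V n → V n → Prop :=
  Relation.ReflTransGen (fun x y => ∃ i ∈ I, y = sRefl (alphaR n ct i) x)

/-- `μ` lies in the `W`-orbit of `λ`. -/
def WOrb (n : ℕ) (ct : CType) : V n → V n → Prop := WIOrb n ct Finset.univ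

/-- `λ ∈ Λ_I⁺`. -/
def LamIPlus (n : ℕ) (ct : CType) (I : Finset (Fin n)) (lam : V n) : Prop :=
  IntegralW n ct lam ∧ ∀ i ∈ I, 0 < inn lam (alphaR n ct i)

/-- The sorted list `q_1 < q_2 < … < q_{m-1}` (`1`-based values) of indices of `Δ∖I`. -/
def Qlist (n : ℕ) (I : Finset (Fin n)) : List ℕ :=
  ((Finset.univ \ I).sort (· ≤ ·)).map (fun j => j.1 + 1)

/-- The number `m` of segments determined by `I`. -/
def mval (n : ℕ) (I : Finset (Fin n)) : ℕ := (Qlist n I).length + 1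

/-- `q_s`, with the conventions `q_0 = 0` and `q_m = n`. -/
def qval (n : ℕ) (I : Finset (Fin n)) (s : ℕ) : ℕ :=
  if s = 0 then 0 else if s < mval n I then (Qlist n I).getD (s - 1) 0 else n

/-- `I` is standard (automatic in types `B`, `C`). -/
def StandardI (n : ℕ) (ct : CType) (I : Finset (Fin n)) : Prop :=
  ct = CType.D → ∀ h : 2 ≤ n,
    ((⟨n - 2, by omega⟩ : Fin n) ∈ I ∨ (⟨n - 1, by omega⟩ : Fin n) ∉ I)

/-- `q_s`, corrected for nonstandard `I` (where `q_{m-1}` is replaced by `n`,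
so that the `(m-1)`-st segment is `(q_{m-2}, n]` and the `m`-th segment is empty). -/
def qv (n : ℕ) (ct : CType) (I : Finset (Fin n)) (s : ℕ) : ℕ :=
  if ¬ StandardI n ct I ∧ s = mval n I - 1 then n else qval n I s

/-- The segment length `n_s`. -/
def nsval (n : ℕ) (ct : CType) (I : Finset (Fin n)) (s : ℕ) : ℕ :=
  qv n ct I s - qv n ct I (s - 1)

/-- The (`0`-based) index `i` lies in the `s`-th segment, i.e. `q_{s-1} < i+1 ≤ q_s`. -/
def InSeg (n : ℕ) (ct : CType) (I : Finset (Fin n)) (s : ℕ) (i : Fin n) : Prop :=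
  qv n ct I (s - 1) < i.1 + 1 ∧ i.1 + 1 ≤ qv n ct I s

/-- `n_s^λ(a)`: the number of entries of the `s`-th segment of `λ` with absolute value `a`. -/
def nsl (n : ℕ) (ct : CType) (I : Finset (Fin n)) (lam : V n) (s : ℕ) (a : ℝ) : ℕ :=
  (Finset.univ.filter (fun i : Fin n => InSeg n ct I s i ∧ |lam i| = a)).card

/-- `a_t = λ̄_{q̄_t}` for `1 ≤ t < m̄`, and `a_{m̄} = 0`. -/
def aval (n : ℕ) (ct : CType) (J : Finset (Fin n)) (lbar : V n) (t : ℕ) : ℝ :=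
  if t < mval n J then
    (if h : qv n ct J t - 1 < n then lbar ⟨qv n ct J t - 1, h⟩ else 0)
  else 0

/-- `n_s^λ(a)` is maximal among all `Φ_I`-regular weights in the orbit of `λ`. -/
def IsMaxN (n : ℕ) (ct : CType) (I : Finset (Fin n)) (lam : V n) (s : ℕ) (a : ℝ) : Prop :=
  ∀ mu : V n, WOrb n ct lam mu → RegI n ct I mu →
    nsl n ct I mu s a ≤ nsl n ct I lam s a

/-- The exceptional configurations of Proposition 4.7 (types `B` and `C`, with
`shortR i` the short/long root `e_i` resp. `2e_i`). -/
def ExcBC (n : ℕ) (ct : CType) (I : Finset (Fin n)) (shortR : Fin n → V n)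
    (lam β : V n) : Prop :=
  ∃ s : ℕ, 1 ≤ s ∧ s < mval n I ∧ ∃ a : ℝ, 0 < a ∧
    nsl n ct I lam s a = 1 ∧
    nsl n ct I lam s 0 + nsl n ct I lam (mval n I) a = 1 ∧
    ((∃ i j : Fin n, InSeg n ct I s i ∧ InSeg n ct I s j ∧
        |lam i| = a ∧ lam j = 0 ∧ (β = shortR i ∨ β = ee i + ee j)) ∨
     (∃ i j : Fin n, InSeg n ct I s i ∧ InSeg n ct I (mval n I) j ∧
        ((lam i = a ∧ lam j = a) ∨ (lam i = -a ∧ lam j = -a)) ∧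
        (β = shortR i ∨ β = ee i + ee j)) ∨
     (∃ i j : Fin n, InSeg n ct I s i ∧ InSeg n ct I (mval n I) j ∧
        ((lam i = a ∧ lam j = -a) ∨ (lam i = -a ∧ lam j = a)) ∧
        (β = shortR i ∨ β = ee i - ee j)))

/-- The exceptional configurations of Proposition 4.7 (type `D`). -/
def ExcD (n : ℕ) (I : Finset (Fin n)) (lam β : V n) : Prop :=
  ∃ s : ℕ, 1 ≤ s ∧ s < mval n I ∧ ∃ a : ℝ, 0 < a ∧
    nsl n CType.D I lam s a = 1 ∧ nsl n CType.D I lam (mval n I) a = 1 ∧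
    nsl n CType.D I lam s 0 = 1 ∧ nsl n CType.D I lam (mval n I) 0 = 1 ∧
    ∃ i j k l : Fin n, InSeg n CType.D I s i ∧ InSeg n CType.D I s j ∧
      InSeg n CType.D I (mval n I) k ∧ InSeg n CType.D I (mval n I) l ∧
      lam j = 0 ∧ lam l = 0 ∧
      ((((lam i = a ∧ lam k = a) ∨ (lam i = -a ∧ lam k = -a)) ∧
          (β = ee i + ee j ∨ β = ee i + ee k)) ∨
       (((lam i = a ∧ lam k = -a) ∨ (lam i = -a ∧ lam k = a)) ∧
          (β = ee i + ee j ∨ β = ee i - ee k)))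

/-- The exceptional configurations in which `β` fails to be a linked root. -/
def Exc (n : ℕ) (ct : CType) (I : Finset (Fin n)) (lam β : V n) : Prop :=
  match ct with
  | CType.B => ExcBC n CType.B I (fun i => ee i) lam β
  | CType.C => ExcBC n CType.C I (fun i => (2:ℝ) • ee i) lam β
  | CType.D => ExcD n I lam β

/-- `β` is a linked root of the `Φ_I`-regular weight `λ` (for standard `I`). -/
def PlainLinked (n : ℕ) (ct : CType) (I : Finset (Fin n)) (lam β : V n) : Prop :=
  RegI n ct I lam ∧ β ∈ PhiPos n ct ∧ β ∉ PhiI n ct I ∧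
  RegI n ct I (sRefl β lam) ∧ sRefl β lam ≠ lam ∧ ¬ Exc n ct I lam β

/-- The transposition of the last two indices. -/
def swapLast (n : ℕ) (j : Fin n) : Fin n :=
  if j.1 = n - 1 then ⟨n - 2, Nat.sub_lt j.pos (by norm_num)⟩
  else if j.1 = n - 2 then ⟨n - 1, Nat.sub_lt j.pos (by norm_num)⟩
  else j

/-- The isomorphism `φ = s_{e_n}` (negating the last coordinate). -/
def phiW {n : ℕ} (x : V n) : V n := fun j => if j.1 = n - 1 then -x j else x j

/-- The image `φ(I)` of an index set under `φ` (interchanging `α_{n-1}` and `α_n`). -/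
def phiIdx (n : ℕ) (I : Finset (Fin n)) : Finset (Fin n) := I.image (swapLast n)

/-- `β` is a linked root of `λ`; for nonstandard `I` the notion is transported along `φ`. -/
def LinkedRoot (n : ℕ) (ct : CType) (I : Finset (Fin n)) (lam β : V n) : Prop :=
  if StandardI n ct I then PlainLinked n ct I lam β
  else PlainLinked n ct (phiIdx n I) (phiW lam) (phiW β)

/-- One step in a connecting chain: `y ∈ W_I x`, or `y = w s_β x` for a linked root `β` of `x`. -/
def ConnStep (n : ℕ) (ct : CType) (I : Finset (Fin n)) (x y : V n) : Prop :=
  RegI n ct I x ∧ RegI n ct I y ∧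
  (WIOrb n ct I x y ∨ ∃ β : V n, LinkedRoot n ct I x β ∧ WIOrb n ct I (sRefl β x) y)

/-- `λ ⟷ μ`: `λ` and `μ` are connected by a chain of linked roots. -/
def Conn (n : ℕ) (ct : CType) (I : Finset (Fin n)) (lam mu : V n) : Prop :=
  RegI n ct I lam ∧ RegI n ct I mu ∧
  Relation.ReflTransGen (ConnStep n ct I) lam mu

/-- The set `^IW^Jλ̄ = Wλ̄ ∩ Λ_I⁺` of weights parametrizing the simple modules. -/
def IWJset (n : ℕ) (ct : CType) (I : Finset (Fin n)) (lbar : V n) : Set (V n) :=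
  {mu | WOrb n ct lbar mu ∧ LamIPlus n ct I mu}

/-- `(S, S̄)` is a separable pair for the weight `λ`. -/
def IsSepPair (n : ℕ) (ct : CType) (I J : Finset (Fin n)) (lbar lam : V n)
    (S Sb : Finset ℕ) : Prop :=
  S.Nonempty ∧ Sb.Nonempty ∧
  S ⊆ Finset.Icc 1 (mval n I) ∧ Sb ⊆ Finset.Icc 1 (mval n J) ∧
  1 < mval n I ∧ 1 < mval n J ∧
  (∀ s ∈ S, ∀ t ∈ Sb, IsMaxN n ct I lam s (aval n ct J lbar t)) ∧
  (∀ s ∈ Finset.Icc 1 (mval n I), s ∉ S →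
     ∀ t ∈ Finset.Icc 1 (mval n J), t ∉ Sb →
       nsl n ct I lam s (aval n ct J lbar t) = 0) ∧
  (match ct with
   | CType.B => (mval n I ∈ S ↔ mval n J ∉ Sb)
   | CType.C => (mval n I ∈ S ↔ mval n J ∉ Sb)
   | CType.D => (mval n I ∈ S ↔ mval n J ∈ Sb))

/-- `𝒟`: the set of separable pairs of the system `(Φ, Φ_I, Φ_J)`. -/
def DSet (n : ℕ) (ct : CType) (I J : Finset (Fin n)) (lbar : V n) :
    Set (Finset ℕ × Finset ℕ) :=
  {p | ∀ lam ∈ IWJset n ct I lbar, IsSepPair n ct I J lbar lam p.1 p.2}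

/-- The four weakly separable pairs. -/
def IsWeakPair (n : ℕ) (I J : Finset (Fin n)) (p : Finset ℕ × Finset ℕ) : Prop :=
  p = (Finset.Icc 1 (mval n I - 1), {mval n J}) ∨
  p = (Finset.Icc 1 (mval n I), {mval n J}) ∨
  p = ({mval n I}, Finset.Icc 1 (mval n J - 1)) ∨
  p = ({mval n I}, Finset.Icc 1 (mval n J))

/-- The system `(Φ, Φ_I, Φ_J)` is separable. -/
def SepSys (n : ℕ) (ct : CType) (I J : Finset (Fin n)) (lbar : V n) : Prop :=
  (DSet n ct I J lbar).Nonempty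

/-- The system `(Φ, Φ_I, Φ_J)` is strongly separable. -/
def StronglySepSys (n : ℕ) (ct : CType) (I J : Finset (Fin n)) (lbar : V n) : Prop :=
  ∃ p ∈ DSet n ct I J lbar, ¬ IsWeakPair n I J p

/-- The system `(Φ, Φ_I, Φ_J)` is weakly separable. -/
def WeaklySepSys (n : ℕ) (ct : CType) (I J : Finset (Fin n)) (lbar : V n) : Prop :=
  SepSys n ct I J lbar ∧ ∀ p ∈ DSet n ct I J lbar, IsWeakPair n I J p

/-- The partial ordering on separable pairs: `(S₁,S̄₁) ≤ (S₂,S̄₂)` iff `S₁ ⊆ S₂`, `S̄₁ ⊇ S̄₂`. -/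
def pairLE (p q : Finset ℕ × Finset ℕ) : Prop := p.1 ⊆ q.1 ∧ q.2 ⊆ p.2

/-- Strict version of `pairLE`. -/
def pairLT (p q : Finset ℕ × Finset ℕ) : Prop := pairLE p q ∧ p ≠ q

/-- The generating relations of the equivalence `∼` on `𝒟`. -/
def PairRel (D : Set (Finset ℕ × Finset ℕ)) (p q : Finset ℕ × Finset ℕ) : Prop :=
  p ∈ D ∧ q ∈ D ∧ ((p.2 = q.2 ∧ p.1 ⊆ q.1) ∨ (p.1 = q.1 ∧ p.2 ⊆ q.2))

/-- The equivalence relation `∼` on separable pairs. -/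
def PairEquiv (D : Set (Finset ℕ × Finset ℕ)) :
    Finset ℕ × Finset ℕ → Finset ℕ × Finset ℕ → Prop :=
  Relation.EqvGen (PairRel D)

/-- A trivial separable pair. -/
def TrivialPair (n : ℕ) (ct : CType) (I J : Finset (Fin n)) (lbar : V n)
    (p : Finset ℕ × Finset ℕ) : Prop :=
  match ct with
  | CType.B | CType.C =>
    (∃ s0 : ℕ, 1 ≤ s0 ∧ s0 < mval n I ∧
       PairEquiv (DSet n ct I J lbar) p ({s0}, Finset.Icc 1 (mval n J))) ∨
    (∃ t0 : ℕ, 1 ≤ t0 ∧ t0 < mval n J ∧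
       PairEquiv (DSet n ct I J lbar) p (Finset.Icc 1 (mval n I), {t0}))
  | CType.D =>
    (∃ s0 : ℕ, 1 ≤ s0 ∧ s0 < mval n I ∧
       PairEquiv (DSet n ct I J lbar) p ({s0}, Finset.Icc 1 (mval n J - 1))) ∨
    (∃ t0 : ℕ, 1 ≤ t0 ∧ t0 < mval n J ∧
       PairEquiv (DSet n ct I J lbar) p (Finset.Icc 1 (mval n I - 1), {t0}))

/-- The set of blocks: equivalence classes of `^IW^Jλ̄` under `⟷`. -/
def BlockSet (n : ℕ) (ct : CType) (I : Finset (Fin n)) (lbar : V n) : Set (Set (V n)) :=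
  {Cl | ∃ lam ∈ IWJset n ct I lbar,
     Cl = {mu | mu ∈ IWJset n ct I lbar ∧ Conn n ct I lam mu}}

/-- The parity `P(λ)` of the number of negative entries of `λ`. -/
def Pfun (n : ℕ) (lam : V n) : ℕ :=
  (Finset.univ.filter (fun i : Fin n => lam i < 0)).card % 2

/-- A fundamental chain `c 1 ∼ c 2 ∼ … ∼ c k` in `𝒟`. -/
def IsFundChain (D : Set (Finset ℕ × Finset ℕ)) (c : ℕ → Finset ℕ × Finset ℕ)
    (k : ℕ) : Prop :=
  1 ≤ k ∧ (∀ i, 1 ≤ i → i ≤ k → c i ∈ D) ∧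
  (∀ i, 1 ≤ i → i < k →
     ((c i).1 = (c (i+1)).1 ∨ (c i).2 = (c (i+1)).2) ∧
     (pairLT (c i) (c (i+1)) ∨ pairLT (c (i+1)) (c i)))

/-- The list of parts of the partition `π_I`. -/
def piParts (n : ℕ) (ct : CType) (I : Finset (Fin n)) : List ℕ :=
  (List.range (mval n I - 1)).map (fun s => nsval n ct I (s+1)) ++
  (List.range (mval n I - 1)).map (fun s => nsval n ct I (s+1)) ++
  (match ct with
   | CType.B => [2 * nsval n ct I (mval n I) + 1]
   | CType.C => [2 * nsval n ct I (mval n I)]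
   | CType.D => if nsval n ct I (mval n I) = 0 then []
                else [2 * nsval n ct I (mval n I) - 1, 1])

/-- The `i`-th part (`1`-based) of the partition with list of parts `L`. -/
def partAt (L : List ℕ) (i : ℕ) : ℕ :=
  (L.mergeSort (fun a b => decide (b ≤ a))).getD (i - 1) 0

/-- The `i`-th part (`1`-based) of the dual partition `π^t`: the number of parts `≥ i`. -/
def dualAt (L : List ℕ) (i : ℕ) : ℕ :=
  (L.filter (fun x => decide (i ≤ x))).length

/-- `k` is compatible with the system `(Φ, Φ_I, Φ_J)`. -/
def CompatibleK (n : ℕ) (ct : CType) (I J : Finset (Fin n)) (k : ℕ) : Prop :=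
  1 ≤ k ∧ k ≤ 2 * mval n I - 1 ∧
  (match ct with
   | CType.B =>
     (Odd k ∧ k ≤ partAt (piParts n CType.B J) 2 ∧
        2 * nsval n CType.B J (mval n J) + 1 ≤ k ∧
        partAt (piParts n CType.B I) k ≤ 2 * nsval n CType.B I (mval n I) + 1) ∨
     (Even k ∧ k ≤ 2 * nsval n CType.B J (mval n J) ∧
        2 * nsval n CType.B I (mval n I) + 1 ≤ partAt (piParts n CType.B I) k)
   | CType.C =>
     (Odd k ∧ k ≤ partAt (piParts n CType.C J) 2 ∧
        2 * nsval n CType.C J (mval n J) + 1 ≤ k ∧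
        partAt (piParts n CType.C I) k ≤ 2 * nsval n CType.C I (mval n I)) ∨
     (Even k ∧ k ≤ 2 * nsval n CType.C J (mval n J) ∧
        2 * nsval n CType.C I (mval n I) + 1 ≤ partAt (piParts n CType.C I) k)
   | CType.D =>
     (Even k ∧ k ≤ partAt (piParts n CType.D J) 2 ∧
        2 * nsval n CType.D J (mval n J) ≤ k ∧
        2 * nsval n CType.D I (mval n I) ≤ partAt (piParts n CType.D I) k) ∨
     (Odd k ∧ k ≤ 2 * nsval n CType.D J (mval n J) - 1 ∧
        partAt (piParts n CType.D I) k ≤ 2 * nsval n CType.D I (mval n I) - 1))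

/-- `s_{e_{k_1}}^{ε_1} ⋯ s_{e_{k_r}}^{ε_r} μ`. -/
def applyFlips (n : ℕ) (ks : ℕ → Fin n) (eps : ℕ → Bool) : ℕ → V n → V n
  | 0, v => v
  | (r+1), v =>
      if eps (r+1) then sRefl (ee (ks (r+1))) (applyFlips n ks eps r v)
      else applyFlips n ks eps r v

end

theorem weak_to_fund (D : Set (Finset ℕ × Finset ℕ)) (d : ℕ → Finset ℕ × Finset ℕ) :
    ∀ k, 1 ≤ k → (∀ i, 1 ≤ i → i ≤ k → d i ∈ D) →
    (∀ i, 1 ≤ i → i < k → d i = d (i+1) ∨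
     (((d i).1 = (d (i+1)).1 ∨ (d i).2 = (d (i+1)).2) ∧
     (pairLT (d i) (d (i+1)) ∨ pairLT (d (i+1)) (d i)))) →
    ∃ (c' : ℕ → Finset ℕ × Finset ℕ) (k' : ℕ), IsFundChain D c' k' ∧ c' 1 = d 1 ∧
      c' k' = d k ∧ k' ≤ k ∧ ((∃ i, 1 ≤ i ∧ i < k ∧ d i = d (i+1)) → k' < k) := by
  intro k hk
  induction k, hk using Nat.le_induction with
  | base =>
    intro hD _
    refine ⟨d, 1, ⟨le_refl _, hD, ?_⟩, rfl, rfl, le_refl _, ?_⟩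
    · intro i h1 h2; omega
    · rintro ⟨i, h1, h2, _⟩; omega
  | succ k hk ih =>
    intro hD hs
    obtain ⟨c', k', ⟨hk', hcD, hcs⟩, h1, h2, hle, hlt⟩ :=
      ih (fun i a b => hD i a (by omega)) (fun i a b => hs i a (by omega))
    rcases hs k hk (by omega) with heq | hst
    · exact ⟨c', k', ⟨hk', hcD, hcs⟩, h1, by rw [h2, heq], by omega, fun _ => by omega⟩
    · refine ⟨fun j => if j ≤ k' then c' j else d (k+1), k'+1, ⟨by omega, ?_, ?_⟩, ?_, ?_,
        by omega, ?_⟩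
      · intro i a b
        by_cases h : i ≤ k'
        · simpa [h] using hcD i a h
        · simpa [h] using hD (k+1) (by omega) le_rfl
      · intro i a b
        by_cases h : i + 1 ≤ k'
        · have h' : i ≤ k' := by omega
          simpa [h, h'] using hcs i a (by omega)
        · have h' : i = k' := by omega
          subst h'
          simpa [h2] using hst
      · simp [hk', h1]
      · simp
      · rintro ⟨i, a, b, e⟩
        by_cases h : i = k
        · subst h
          rcases hst.2 with q | q
          · exact absurd e q.2
          · exact absurd e.symm q.2
        · have := hlt ⟨i, a, by omega, e⟩
          omega

theorem sep_clos {n : ℕ} {ct : CType} {I J : Finset (Fin n)} {lbar : V n}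
    {x y z : Finset ℕ × Finset ℕ}
    (hx : x ∈ DSet n ct I J lbar) (hy : y ∈ DSet n ct I J lbar) (hz : z ∈ DSet n ct I J lbar)
    (hxy : mval n I ∈ y.1 ↔ mval n I ∈ x.1) (hxz : mval n I ∈ z.1 ↔ mval n I ∈ x.1)
    (hle : z.1 ⊆ x.1) :
    (x.1 ∩ (y.1 ∪ z.1), x.2 ∪ (y.2 ∩ z.2)) ∈ DSet n ct I J lbar := by
  intro lam hl
  obtain ⟨x1, x2, x3, x4, x5, x6, x7, x8, x9⟩ := hx lam hl
  obtain ⟨y1, y2, y3, y4, y5, y6, y7, y8, y9⟩ := hy lam hl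
  obtain ⟨z1, z2, z3, z4, z5, z6, z7, z8, z9⟩ := hz lam hl
  refine ⟨?_, ?_, ?_, ?_, x5, x6, ?_, ?_, ?_⟩
  · obtain ⟨a, ha⟩ := z1
    exact ⟨a, by simp [ha, hle ha]⟩
  · obtain ⟨a, ha⟩ := x2
    exact ⟨a, by simp [ha]⟩
  · exact fun a ha => x3 (Finset.mem_inter.1 ha).1
  · intro a ha
    rcases Finset.mem_union.1 ha with h | h
    · exact x4 h
    · exact y4 (Finset.mem_inter.1 h).1
  · intro s hs t ht
    simp only [Finset.mem_inter, Finset.mem_union] at hs ht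
    rcases ht with h | h
    · exact x7 s hs.1 t h
    · rcases hs.2 with g | g
      · exact y7 s g t h.1
      · exact z7 s g t h.2
  · intro s hs1 hs t ht1 ht
    simp only [Finset.mem_inter, Finset.mem_union, not_and_or, not_or] at hs ht
    rcases hs with g | g
    · exact x8 s hs1 g t ht1 ht.1
    · rcases ht.2 with h | h
      · exact y8 s hs1 g.1 t ht1 h
      · exact z8 s hs1 g.2 t ht1 h
  · cases ct <;> simp only [Finset.mem_inter, Finset.mem_union] at * <;> tauto

theorem sep_inv {n : ℕ} {ct : CType} {I J : Finset (Fin n)} {lbar : V n}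
    (hne : (IWJset n ct I lbar).Nonempty)
    {x y : Finset ℕ × Finset ℕ}
    (hx : x ∈ DSet n ct I J lbar) (hy : y ∈ DSet n ct I J lbar)
    (h : x.1 = y.1 ∨ x.2 = y.2) : mval n I ∈ y.1 ↔ mval n I ∈ x.1 := by
  obtain ⟨lam, hl⟩ := hne
  rcases h with h | h
  · rw [h]
  · obtain ⟨-, -, -, -, -, -, -, -, x9⟩ := hx lam hl
    obtain ⟨-, -, -, -, -, -, -, -, y9⟩ := hy lam hl
    rw [h] at x9
    cases ct <;> simp only at x9 y9 <;> tauto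

theorem pairLT_antisymm {x y : Finset ℕ × Finset ℕ} (h : pairLE x y) (h' : pairLE y x) :
    x = y :=
  Prod.ext (h.1.antisymm h'.1) (h'.2.antisymm h.2)

/-- Running meet of the chain, clamped below by `z`. -/
def runMeet (z : Finset ℕ × Finset ℕ) (c : ℕ → Finset ℕ × Finset ℕ) :
    ℕ → Finset ℕ × Finset ℕ
  | 0 => c 1
  | i+1 => if i = 0 then c 1 else
      ((runMeet z c i).1 ∩ ((c (i+1)).1 ∪ z.1), (runMeet z c i).2 ∪ ((c (i+1)).2 ∩ z.2))

/-- Lemma 6.5 / `splem7`. -/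
theorem statement10 (n : ℕ) (ct : CType) (I J : Finset (Fin n)) (lbar : V n)
    (hdom : DominantW n ct lbar) (hint : IntegralW n ct lbar)
    (hJ : ∀ i : Fin n, i ∈ J ↔ inn lbar (alphaR n ct i) = 0)
    (hA : 0 < aval n ct J lbar (mval n J - 1))
    (hne : (IWJset n ct I lbar).Nonempty)
    (p p' : Finset ℕ × Finset ℕ)
    (hp : p ∈ DSet n ct I J lbar) (hp' : p' ∈ DSet n ct I J lbar)
    (hgt : pairLT p' p) (hequiv : PairEquiv (DSet n ct I J lbar) p p')
    (c : ℕ → Finset ℕ × Finset ℕ) (k : ℕ)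
    (hchain : IsFundChain (DSet n ct I J lbar) c k) (hc1 : c 1 = p) (hck : c k = p')
    (hshort : ∀ (c' : ℕ → Finset ℕ × Finset ℕ) (k' : ℕ),
      IsFundChain (DSet n ct I J lbar) c' k' → c' 1 = p → c' k' = p' → k ≤ k') :
    (∀ i, 1 ≤ i → i < k → ((c i).1 = (c (i+1)).1 ∨ (c i).2 = (c (i+1)).2)) ∧
    (∀ i j, 1 ≤ i → i < j → j ≤ k → j ≠ i + 1 →
       (c i).1 ≠ (c j).1 ∧ (c i).2 ≠ (c j).2) ∧
    (∀ i, 1 ≤ i → i < k → pairLT (c (i+1)) (c i)) := by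
  obtain ⟨hk, hcD, hcs⟩ := hchain
  set D := DSet n ct I J lbar with hDdef
  have hinv : ∀ i, 1 ≤ i → i ≤ k → (mval n I ∈ (c i).1 ↔ mval n I ∈ p.1) := by
    intro i hi
    induction i, hi using Nat.le_induction with
    | base => intro _; rw [hc1]
    | succ i hi ih =>
      intro h
      rw [← ih (by omega)]
      exact sep_inv hne (hcD i hi (by omega)) (hcD (i+1) (by omega) h) (hcs i hi (by omega)).1
  have hinv' : mval n I ∈ p'.1 ↔ mval n I ∈ p.1 := by
    rw [← hck]; exact hinv k hk le_rfl
  have hnoeq : ∀ d : ℕ → Finset ℕ × Finset ℕ, d 1 = p → d k = p' →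
      (∀ i, 1 ≤ i → i ≤ k → d i ∈ D) →
      (∀ i, 1 ≤ i → i < k → d i = d (i+1) ∨
       (((d i).1 = (d (i+1)).1 ∨ (d i).2 = (d (i+1)).2) ∧
       (pairLT (d i) (d (i+1)) ∨ pairLT (d (i+1)) (d i)))) →
      ∀ i, 1 ≤ i → i < k → d i ≠ d (i+1) := by
    intro d h1 h2 h3 h4 i hi1 hi2 he
    obtain ⟨c', k', hf, e1, e2, -, hlt⟩ := weak_to_fund D d k hk h3 h4
    have := hlt ⟨i, hi1, hi2, he⟩
    have := hshort c' k' hf (e1.trans h1) (e2.trans h2)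
    omega
  have hstep : ∀ i, 1 ≤ i → runMeet p' c (i+1) =
      ((runMeet p' c i).1 ∩ ((c (i+1)).1 ∪ p'.1),
        (runMeet p' c i).2 ∪ ((c (i+1)).2 ∩ p'.2)) := by
    intro i hi
    have : i ≠ 0 := by omega
    rw [runMeet, if_neg this]
  have hfirst : runMeet p' c 1 = p := by simp [runMeet, hc1]
  have hprop : ∀ i, 1 ≤ i → i ≤ k → runMeet p' c i ∈ D ∧ pairLE p' (runMeet p' c i) ∧
      (runMeet p' c i).1 ⊆ (c i).1 ∪ p'.1 ∧ (c i).2 ∩ p'.2 ⊆ (runMeet p' c i).2 ∧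
      (mval n I ∈ (runMeet p' c i).1 ↔ mval n I ∈ p.1) := by
    intro i hi
    induction i, hi using Nat.le_induction with
    | base =>
      intro _
      rw [hfirst, hc1]
      exact ⟨hp, hgt.1, Finset.subset_union_left, Finset.inter_subset_left, Iff.rfl⟩
    | succ i hi ih =>
      intro h
      obtain ⟨a1, a2, a3, a4, a5⟩ := ih (by omega)
      have hI := hinv (i+1) (by omega) h
      rw [hstep i hi]
      refine ⟨sep_clos a1 (hcD _ (by omega) h) hp' (hI.trans a5.symm) (hinv'.trans a5.symm) a2.1,
        ⟨?_, ?_⟩, Finset.inter_subset_right, Finset.subset_union_right, ?_⟩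
      · exact Finset.subset_inter a2.1 Finset.subset_union_right
      · exact Finset.union_subset a2.2 Finset.inter_subset_right
      · simp only [Finset.mem_inter, Finset.mem_union]; tauto
  have hlast : runMeet p' c k = p' := by
    obtain ⟨-, a2, a3, a4, -⟩ := hprop k hk le_rfl
    rw [hck] at a3 a4
    simp only [Finset.union_self, Finset.inter_self] at a3 a4
    exact pairLT_antisymm ⟨a3, a4⟩ a2
  have hle : ∀ i, 1 ≤ i → pairLE (runMeet p' c (i+1)) (runMeet p' c i) := by
    intro i hi
    rw [hstep i hi]
    exact ⟨Finset.inter_subset_left, Finset.subset_union_left⟩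
  have hcoord : ∀ i, 1 ≤ i → i < k → 
      ((c i).1 ⊆ (c (i+1)).1 → (runMeet p' c i).1 = (runMeet p' c (i+1)).1) ∧
      ((c (i+1)).2 ⊆ (c i).2 → (runMeet p' c i).2 = (runMeet p' c (i+1)).2) := by
    intro i hi hik
    obtain ⟨-, a2, a3, a4, -⟩ := hprop i hi hik.le
    rw [hstep i hi]
    constructor
    · intro h
      exact (Finset.inter_eq_left.2 (a3.trans (Finset.union_subset_union_left h))).symm
    · intro h
      exact (Finset.union_eq_left.2 ((Finset.inter_subset_inter_right h).trans a4)).symm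
  have hne' := hnoeq (runMeet p' c) hfirst hlast (fun i a b => (hprop i a b).1) (by
    intro i hi hik
    by_cases he : runMeet p' c i = runMeet p' c (i+1)
    · exact Or.inl he
    · refine Or.inr ⟨?_, Or.inr ⟨hle i hi, fun h => he h.symm⟩⟩
      rcases (hcs i hi hik).1 with h | h
      · exact Or.inl ((hcoord i hi hik).1 h.subset)
      · exact Or.inr ((hcoord i hi hik).2 h.symm.subset))
  have h3 : ∀ i, 1 ≤ i → i < k → pairLT (c (i+1)) (c i) := by
    intro i hi hik
    rcases (hcs i hi hik).2 with h | h
    · exact absurd (Prod.ext ((hcoord i hi hik).1 h.1.1) ((hcoord i hi hik).2 h.1.2))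
        (hne' i hi hik)
    · exact h
  have hmono : ∀ i j, 1 ≤ i → i < j → j ≤ k → pairLT (c j) (c i) := by
    intro i j hi hij
    induction j, hij using Nat.le_induction with
    | base => intro h; exact h3 i hi h
    | succ j hj ih =>
      intro h
      have A := ih (by omega)
      have B := h3 j (by omega) (by omega)
      refine ⟨⟨B.1.1.trans A.1.1, A.1.2.trans B.1.2⟩, fun e => ?_⟩
      rw [e] at B
      exact A.2 (pairLT_antisymm A.1 B.1)
  have h2 : ∀ i j, 1 ≤ i → i < j → j ≤ k → j ≠ i + 1 →
      ¬ ((c i).1 = (c j).1 ∨ (c i).2 = (c j).2) := by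
    intro i j hi hij hjk hji hc
    refine hnoeq (fun l => if l ≤ i then c l else if l ≤ j then c j else c l) ?_ ?_ ?_ ?_
      (i+1) (by omega) (by omega) ?_
    · simp [hi, hc1]
    · have : ¬ k ≤ i := by omega
      by_cases h : k ≤ j
      · have : j = k := by omega
        subst this
        simp [this, hck]
      · simp [this, h, hck]
    · intro l a b
      split_ifs
      · exact hcD l a b
      · exact hcD j (by omega) hjk
      · exact hcD l a b
    · intro l a b
      by_cases g1 : l + 1 ≤ i
      · rw [if_pos (by omega : l ≤ i), if_pos g1]
        exact Or.inr (hcs l a b)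
      by_cases g2 : l = i
      · subst g2
        rw [if_pos le_rfl, if_neg g1, if_pos (by omega : l + 1 ≤ j)]
        exact Or.inr ⟨hc, Or.inr (hmono l j hi hij hjk)⟩
      rw [if_neg (by omega : ¬ l ≤ i), if_neg g1]
      by_cases g3 : l + 1 ≤ j
      · rw [if_pos (by omega : l ≤ j), if_pos g3]
        exact Or.inl rfl
      rw [if_neg g3]
      by_cases g4 : l = j
      · subst g4
        rw [if_pos le_rfl]
        exact Or.inr (hcs l a b)
      · rw [if_neg (by omega : ¬ l ≤ j)]
        exact Or.inr (hcs l a b)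
    · skip
      rw [if_neg (by omega : ¬ i + 1 ≤ i), if_neg (by omega : ¬ i + 1 + 1 ≤ i), if_pos (by omega : i + 1 ≤ j),
        if_pos (by omega : i + 1 + 1 ≤ j)]
  exact ⟨fun i hi hik => (hcs i hi hik).1,
    fun i j a b e f => not_or.1 (h2 i j a b e f), h3⟩

end JantzenBlocks
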